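/- Let C be an abelian category admitting a derived category D(C). Let K_0, K_1, …, K_n be cochain complexes over C and let f_i : K_i ⟶ K_{i+1} (0 ≤ i < n) be morphisms in the derived category D(C). Then there exist cochain complexes L_0, L_1, …, L_n, monomorphisms of cochain complexes g_i : L_i ⟶ L_{i+1} (0 ≤ i < n), and isomorphisms σ_i : K_i ≅ L_i in D(C) (0 ≤ i ≤ n) such that for every i one has σ_{i+1} ∘ f_i = (image of g_i in D(C)) ∘ σ_i in D(C). In other words, any finite chain of composable morphisms in the derived category can be represented, up to isomorphism in D(C), by an honest chain of injective morphisms of complexes, i.e., by a filtered complex. -/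

import Mathlib

/-!
STATEMENT 4: Any finite chain of composable morphisms
`f_i : K_i ⟶ K_{i+1}` (`0 ≤ i < n`) in the derived category `D(C)` of an
abelian category `C` can be represented, up to isomorphisms `σ_i : K_i ≅ L_i`
in `D(C)`, by an honest chain of monomorphisms of cochain complexes
`g_i : L_i ⟶ L_{i+1}`, i.e. by a filtered complex: for every `i` one has
`σ_{i+1} ∘ f_i = Q(g_i) ∘ σ_i` in `D(C)`.
-/

open CategoryTheory Limits

/-!
By the calculus of fractions, a morphism `Q X ⟶ Q Y` is `Q(s)⁻¹ ∘ Q(φ)` for an honest morphism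
`φ : X ⟶ Y'` and a quasi-isomorphism `s : Y ⟶ Y'`. The complex `X` embeds into the cone of its
identity, which is contractible, so replacing `Y'` by `cone(𝟙 X) ⊞ Y'` turns `φ` into a
monomorphism without changing `Y'` up to homotopy. Only the target is modified, so the morphisms
of a chain can be treated one after the other, and more generally those of a forest can be treated
from the roots upwards.
-/

section DependentChoice

variable {ι E : Type*} {s t : E → ι} {P : ι → Type*}

/-- Each vertex `i` is the target of at most one edge, so a value over `i` is constrained only by
the value over its parent. -/
theorem exists_forall_rel_of_wellFounded_edge [∀ i, Nonempty (P i)] (ht : Function.Injective t)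
    (hwf : WellFounded fun i j ↦ ∃ e, s e = i ∧ t e = j)
    (R : ∀ e, P (s e) → P (t e) → Prop) (hR : ∀ e a, ∃ b, R e a b) :
    ∃ D : ∀ i, P i, ∀ e, R e (D (s e)) (D (t e)) := by
  classical
  choose next hnext using hR
  let extend (i : ι) (D : ∀ j, (∃ e, s e = j ∧ t e = i) → P j) : P i :=
    if h : ∃ e, t e = i then
      h.choose_spec ▸ next h.choose (D (s h.choose) ⟨h.choose, rfl, h.choose_spec⟩)
    else Classical.arbitrary (P i)
  have extend_target (e : E) (D : ∀ j, (∃ e', s e' = j ∧ t e' = t e) → P j) :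
      extend (t e) D = next e (D (s e) ⟨e, rfl, rfl⟩) := by
    have h : ∃ e', t e' = t e := ⟨e, rfl⟩
    have eq_of_target {e' : E} (he : t e' = t e) :
        he ▸ next e' (D (s e') ⟨e', rfl, he⟩) = next e (D (s e) ⟨e, rfl, rfl⟩) := by
      obtain rfl := ht he
      rfl
    simp only [extend, dif_pos h]
    exact eq_of_target h.choose_spec
  let D := hwf.fix extend
  have D_target (e : E) : D (t e) = next e (D (s e)) :=
    (hwf.fix_eq extend (t e)).trans (extend_target e fun j _ ↦ D j)
  exact ⟨D, fun e ↦ (D_target e).symm ▸ hnext e (D (s e))⟩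

end DependentChoice

section Homotopy

variable {A : Type*} [Category A] [Preadditive A]

/-- Projection away from a contractible summand, as a homotopy equivalence. -/
noncomputable def homotopyEquivBiprodSnd {α : Type*} {c : ComplexShape α}
    {Z : HomologicalComplex A c} (hZ : Homotopy (𝟙 Z) 0) (L : HomologicalComplex A c)
    [HasBinaryBiproduct Z L] : HomotopyEquiv (Z ⊞ L) L where
  hom := biprod.snd
  inv := biprod.inr
  homotopyHomInvId :=
    have fst_inl : Homotopy (biprod.fst ≫ biprod.inl : Z ⊞ L ⟶ Z ⊞ L) 0 :=
      (Homotopy.ofEq (by simp)).trans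
        (((hZ.compRight biprod.inl).compLeft biprod.fst).trans (Homotopy.ofEq (by simp)))
    (Homotopy.ofEq (by simp)).trans
      ((fst_inl.symm.add (Homotopy.refl (biprod.snd ≫ biprod.inr))).trans
        (Homotopy.ofEq biprod.total))
  homotopyInvHomId := Homotopy.ofEq (by simp)

theorem mono_homotopyCofiber_inr {α : Type*} {c : ComplexShape α} [DecidableRel c.Rel]
    {K L : HomologicalComplex A c} (φ : K ⟶ L) [HomologicalComplex.HasHomotopyCofiber φ] :
    Mono (HomologicalComplex.homotopyCofiber.inr φ) :=
  have (i : α) : Mono ((HomologicalComplex.homotopyCofiber.inr φ).f i) :=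
    mono_of_mono_fac (HomologicalComplex.homotopyCofiber.inrX_sndX φ i)
  HomologicalComplex.mono_of_mono_f _ this

theorem exists_mono_comp_homotopyEquiv [HasBinaryBiproducts A] {K L : CochainComplex A ℤ}
    (φ : K ⟶ L) :
    ∃ (M : CochainComplex A ℤ) (i : K ⟶ M) (e : HomotopyEquiv M L), Mono i ∧ i ≫ e.hom = φ := by
  let toCone : K ⟶ CochainComplex.mappingCone (𝟙 K) := CochainComplex.mappingCone.inr (𝟙 K)
  have : Mono toCone := mono_homotopyCofiber_inr (𝟙 K)
  exact ⟨_, biprod.lift toCone φ,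
    homotopyEquivBiprodSnd (CochainComplex.mappingCone.homotopyToZeroOfId K) L,
    mono_of_mono_fac (biprod.lift_fst toCone φ), biprod.lift_snd toCone φ⟩

end Homotopy

section DerivedCategory

variable {C : Type*} [Category C] [Abelian C] [HasDerivedCategory C]

theorem exists_mono_comp_iso_eq_Q_map {X Y : CochainComplex C ℤ}
    (f : DerivedCategory.Q.obj X ⟶ DerivedCategory.Q.obj Y) :
    ∃ (L : CochainComplex C ℤ) (g : X ⟶ L) (σ : DerivedCategory.Q.obj Y ≅ DerivedCategory.Q.obj L),
      Mono g ∧ f ≫ σ.hom = DerivedCategory.Q.map g := by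
  obtain ⟨Y', φ, s, _, rfl⟩ := DerivedCategory.left_fac f
  obtain ⟨L, g, e, hg, rfl⟩ := exists_mono_comp_homotopyEquiv φ
  have : QuasiIso e.hom := e.quasiIso_hom
  exact ⟨L, g, asIso (DerivedCategory.Q.map s) ≪≫ (asIso (DerivedCategory.Q.map e.hom)).symm, hg,
    by simp⟩

/-- The edges `e`, running from `s e` to `t e`, form a forest directed away from its roots; finite
chains have `s = Fin.castSucc` and `t = Fin.succ`, sequences have `s = id` and `t = Nat.succ`. -/
theorem stmt4_general {ι E : Type*} {s t : E → ι} (ht : Function.Injective t)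
    (hwf : WellFounded fun i j ↦ ∃ e, s e = i ∧ t e = j) (K : ι → CochainComplex C ℤ)
    (f : ∀ e, DerivedCategory.Q.obj (K (s e)) ⟶ DerivedCategory.Q.obj (K (t e))) :
    ∃ (L : ι → CochainComplex C ℤ) (g : ∀ e, L (s e) ⟶ L (t e))
      (σ : ∀ i, DerivedCategory.Q.obj (K i) ≅ DerivedCategory.Q.obj (L i)),
      (∀ e, Mono (g e)) ∧
      (∀ e, f e ≫ (σ (t e)).hom = (σ (s e)).hom ≫ DerivedCategory.Q.map (g e)) := by
  let Model (i : ι) :=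
    Σ L : CochainComplex C ℤ, (DerivedCategory.Q.obj (K i) ≅ DerivedCategory.Q.obj L)
  have (i : ι) : Nonempty (Model i) := ⟨K i, Iso.refl _⟩
  let Represents (e : E) (a : Model (s e)) (b : Model (t e)) : Prop :=
    ∃ g : a.1 ⟶ b.1, Mono g ∧ f e ≫ b.2.hom = a.2.hom ≫ DerivedCategory.Q.map g
  have exists_represents (e : E) (a : Model (s e)) : ∃ b, Represents e a b := by
    obtain ⟨L, g, σ, hg, h⟩ := exists_mono_comp_iso_eq_Q_map (a.2.inv ≫ f e)
    exact ⟨⟨L, σ⟩, g, hg, by simp [← h]⟩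
  obtain ⟨D, hD⟩ := exists_forall_rel_of_wellFounded_edge ht hwf Represents exists_represents
  choose g hg h using hD
  exact ⟨fun i ↦ (D i).1, g, fun i ↦ (D i).2, hg, h⟩

end DerivedCategory

theorem stmt4 {C : Type*} [Category C] [Abelian C] [HasDerivedCategory C]
    (n : ℕ) (K : Fin (n + 1) → CochainComplex C ℤ)
    (f : ∀ i : Fin n,
      DerivedCategory.Q.obj (K i.castSucc) ⟶ DerivedCategory.Q.obj (K i.succ)) :
    ∃ (L : Fin (n + 1) → CochainComplex C ℤ)
      (g : ∀ i : Fin n, L i.castSucc ⟶ L i.succ)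
      (σ : ∀ i : Fin (n + 1), DerivedCategory.Q.obj (K i) ≅ DerivedCategory.Q.obj (L i)),
      (∀ i : Fin n, Mono (g i)) ∧
      (∀ i : Fin n,
        f i ≫ (σ i.succ).hom = (σ i.castSucc).hom ≫ DerivedCategory.Q.map (g i)) :=
  stmt4_general (Fin.succ_injective n)
    (Subrelation.wf (by rintro _ _ ⟨i, rfl, rfl⟩; exact i.castSucc_lt_succ) wellFounded_lt) K f
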